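/- arXiv:2212.14792 — 4 statements merged into one kernel-verified Lean document; each statement's English description precedes it below -/
import Mathlib

section
/- Let Γ contain a triangle C (a cycle on 3 vertices) and a path P of length s whose vertices are v_0, v_1, …, v_s with v_0 a vertex of C and v_1, …, v_s not in C. If the union of the vertex sets of C and P is a dominating set of Γ, then for every integer t ≥ s+2 the maximal graded ideal m is an associated prime of R/I^t (i.e., depth R/I^t = 0). -/
open MvPolynomial

noncomputable section

/-- The edge ideal of a graph `Γ` on vertex set `σ`, in `k[x_i : i ∈ σ]`. -/
def edgeIdeal (k : Type) [Field k] {σ : Type} (Γ : SimpleGraph σ) :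
    Ideal (MvPolynomial σ k) :=
  Ideal.span { m | ∃ i j : σ, Γ.Adj i j ∧ m = X i * X j }

/-- The maximal graded ideal `(x_i : i ∈ σ)` of `k[x_i : i ∈ σ]`. -/
def maxIdeal (k : Type) [Field k] (σ : Type) : Ideal (MvPolynomial σ k) :=
  Ideal.span (Set.range (X : σ → MvPolynomial σ k))

/-- `depth R/J = 0`, i.e. the maximal graded ideal is an associated prime of `R/J`. -/
def DepthZero (k : Type) [Field k] {σ : Type} (J : Ideal (MvPolynomial σ k)) : Prop :=
  maxIdeal k σ ∈ associatedPrimes (MvPolynomial σ k) (MvPolynomial σ k ⧸ J)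

/-- The `i`-th local cohomology of `R/J` with support in the maximal graded ideal. -/
def locCoh (k : Type) [Field k] {σ : Type} (J : Ideal (MvPolynomial σ k)) (i : ℕ) :=
  (localCohomology (maxIdeal k σ) i).obj (ModuleCat.of _ (MvPolynomial σ k ⧸ J))

/-- `depth R/J`, defined as the least `i` with `H^i_m(R/J) ≠ 0`. -/
def rDepth (k : Type) [Field k] {σ : Type} (J : Ideal (MvPolynomial σ k)) : ℕ :=
  sInf { i | Nontrivial (locCoh k J i) }

/-- A set `U` of vertices is dominating: every vertex outside `U` is adjacent to a
vertex of `U`. -/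
def Dominating {σ : Type} (Γ : SimpleGraph σ) (U : Set σ) : Prop :=
  ∀ v ∉ U, ∃ u ∈ U, Γ.Adj u v

/-- The closed neighborhood `N[v]` of a vertex. -/
def closedNbhd {σ : Type} (Γ : SimpleGraph σ) (v : σ) : Set σ :=
  insert v { u | Γ.Adj v u }

/-- The closed neighborhood `N[C]` of a set of vertices. -/
def closedNbhdSet {σ : Type} (Γ : SimpleGraph σ) (C : Set σ) : Set σ :=
  ⋃ v ∈ C, closedNbhd Γ v

/-- An odd cycle of length `m` (given as an injective map `ZMod m → σ` with consecutive
vertices adjacent) in `Γ`. -/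
def IsOddCycle {σ : Type} (Γ : SimpleGraph σ) (m : ℕ) (c : ZMod m → σ) : Prop :=
  Odd m ∧ 3 ≤ m ∧ Function.Injective c ∧ ∀ i, Γ.Adj (c i) (c (i + 1))

/-- `F` is an independent set of `Γ`. -/
def IsIndep {σ : Type} [Fintype σ] [DecidableEq σ] (Γ : SimpleGraph σ) (F : Finset σ) : Prop :=
  ∀ i ∈ F, ∀ j ∈ F, ¬ Γ.Adj i j

/-- `F` is a maximal independent set of `Γ`. -/
def IsMaxIndep {σ : Type} [Fintype σ] [DecidableEq σ] (Γ : SimpleGraph σ) (F : Finset σ) : Prop :=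
  IsIndep Γ F ∧ ∀ G : Finset σ, IsIndep Γ G → F ⊆ G → G = F

/-- The prime ideal `P_F = (x_i : i ∉ F)`. -/
def PF (k : Type) [Field k] {σ : Type} [Fintype σ] [DecidableEq σ] (F : Finset σ) :
    Ideal (MvPolynomial σ k) :=
  Ideal.span { m | ∃ i ∉ F, m = X i }

/-- The `t`-th symbolic power `I^{(t)} = ⋂_{F maximal independent} P_F^t` of the edge ideal. -/
def symbPow (k : Type) [Field k] {σ : Type} [Fintype σ] [DecidableEq σ]
    (Γ : SimpleGraph σ) (t : ℕ) : Ideal (MvPolynomial σ k) :=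
  ⨅ F ∈ { F : Finset σ | IsMaxIndep Γ F }, PF k F ^ t

/-- The monomial `x^a`. -/
def xPow (k : Type) [Field k] {σ : Type} [Fintype σ] (a : σ → ℕ) : MvPolynomial σ k :=
  ∏ i, X i ^ a i

/-- The localization `R[x_i^{-1} : i ∈ F]`. -/
abbrev locAt (k : Type) [Field k] {σ : Type} (F : Finset σ) :=
  Localization (Submonoid.closure ((fun i => (X i : MvPolynomial σ k)) '' (F : Set σ)))

/-- The degree complex `Δ_a(J) = {F : x^a ∉ J·R[x_i^{-1} : i ∈ F]}` of a monomial ideal `J`. -/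
def degComplex (k : Type) [Field k] {σ : Type} [Fintype σ] (J : Ideal (MvPolynomial σ k))
    (a : σ → ℕ) : Set (Finset σ) :=
  { F | algebraMap (MvPolynomial σ k) (locAt k F) (xPow k a) ∉
      J.map (algebraMap (MvPolynomial σ k) (locAt k F)) }

/-- `F` is a facet (maximal face) of the complex `Δ`. -/
def IsFacet {σ : Type} (Δ : Set (Finset σ)) (F : Finset σ) : Prop :=
  F ∈ Δ ∧ ∀ G ∈ Δ, F ⊆ G → G = F

/-- The complex `Δ` is disconnected: its vertex set splits into two nonempty parts such that
no face meets both. -/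
def ComplexDisconnected {σ : Type} (Δ : Set (Finset σ)) : Prop :=
  ∃ A B : Set σ, A.Nonempty ∧ B.Nonempty ∧ Disjoint A B ∧
    (∀ i, {i} ∈ Δ ↔ i ∈ A ∪ B) ∧
    ∀ F ∈ Δ, ¬ ((∃ i ∈ F, i ∈ A) ∧ (∃ j ∈ F, j ∈ B))

/-- The polynomial ring `R_v = k[x_i : i ≠ v]`. -/
abbrev Rv (k : Type) [Field k] {σ : Type} (v : σ) := MvPolynomial { i : σ // i ≠ v } k

/-- The localization `R[x_v^{-1}]`. -/
abbrev LocAway (k : Type) [Field k] {σ : Type} (v : σ) :=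
  Localization.Away (X v : MvPolynomial σ k)

/-- For an ideal `I` of `R`, the ideal `I_v = I·R[x_v^{-1}] ∩ R_v` of `R_v`. -/
def idealV (k : Type) [Field k] {σ : Type} (I : Ideal (MvPolynomial σ k)) (v : σ) :
    Ideal (Rv k v) :=
  Ideal.comap ((algebraMap (MvPolynomial σ k) (LocAway k v)).comp
      (MvPolynomial.rename (Subtype.val : { i : σ // i ≠ v } → σ)).toRingHom)
    (I.map (algebraMap (MvPolynomial σ k) (LocAway k v)))

/-- The edge ideal of the induced subgraph `Γ_U` in `k[x_i : i ∈ U]`. -/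
def edgeIdealOn (k : Type) [Field k] {σ : Type} (Γ : SimpleGraph σ) (U : Set σ) :
    Ideal (MvPolynomial U k) :=
  Ideal.span { m | ∃ i j : U, Γ.Adj (i : σ) (j : σ) ∧ m = X i * X j }

/-- `Γ` has no isolated vertices. -/
def NoIsolated {σ : Type} (Γ : SimpleGraph σ) : Prop :=
  ∀ v : σ, ∃ u : σ, Γ.Adj v u

/-!
Let `I` be the edge ideal and `m` the maximal graded ideal. A nonzero form `f` of degree `2t - 1`
is not in `I ^ t`, which is generated in degree `2t`; if moreover `f * x_i ∈ I ^ t` for every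
vertex `i`, then `f` spans a copy of `R/m` inside `R/I ^ t`.

Such an `f` is grown one vertex at a time. Suppose `f * x_i ∈ I ^ t` for all `i` adjacent to a
vertex set `U`, every vertex of `U` has a neighbour in `U`, and `w ∈ U` is adjacent to `v`. Then
`f * x_w * x_v` has the same property for `U ∪ {v}` and `t + 1`: if `i` is adjacent to `U`, use
`(f * x_i) * (x_w * x_v)`; if `i` is adjacent to `v`, use `(f * x_w) * (x_v * x_i)`. Start with the
product of the three variables of the triangle, follow the path, and then traverse an edge inside
the resulting set as often as needed to reach the required power.
-/

lemma mem_associatedPrimes_quotient_of_isMaximal {R : Type*} [CommRing R] {P J : Ideal R}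
    (hP : P.IsMaximal) {f : R} (hf : f ∉ J) (hPf : ∀ g ∈ P, g * f ∈ J) :
    P ∈ associatedPrimes R (R ⧸ J) := by
  have mem_colon (g : R) :
      g ∈ (⊥ : Submodule R (R ⧸ J)).colon {Ideal.Quotient.mk J f} ↔ g * f ∈ J := by
    rw [Submodule.mem_colon_singleton, Submodule.mem_bot, ← Ideal.Quotient.eq_zero_iff_mem]
    rfl
  refine ⟨hP.isPrime, Ideal.Quotient.mk J f, hP.eq_of_le ?_ ?_⟩
  · rwa [Ne, Ideal.radical_eq_top, Ideal.eq_top_iff_one, mem_colon, one_mul]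
  · exact le_trans (fun g hg => (mem_colon g).2 (hPf g hg)) Ideal.le_radical

section

variable {k : Type} [Field k] {σ : Type}

lemma maxIdeal_eq_ker_constantCoeff :
    maxIdeal k σ = RingHom.ker (constantCoeff : MvPolynomial σ k →+* k) := by
  ext f
  rw [maxIdeal, ← pow_one (Ideal.span _), mem_pow_idealOfVars_iff', RingHom.mem_ker]
  simp [constantCoeff_eq, Finsupp.degree_eq_zero_iff]

lemma maxIdeal_isMaximal : (maxIdeal k σ).IsMaximal := by
  rw [maxIdeal_eq_ker_constantCoeff]
  exact RingHom.ker_isMaximal_of_surjective _ fun a => ⟨C a, constantCoeff_C σ a⟩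

lemma depthZero_of_mul_X_mem {J : Ideal (MvPolynomial σ k)} {f : MvPolynomial σ k}
    (hf : f ∉ J) (hfX : ∀ i, f * X i ∈ J) : DepthZero k J := by
  have maxIdeal_le : maxIdeal k σ ≤ J.colon {f} := by
    rw [maxIdeal, Ideal.span_le]
    rintro _ ⟨i, rfl⟩
    simpa [Submodule.mem_colon_singleton, mul_comm] using hfX i
  exact mem_associatedPrimes_quotient_of_isMaximal maxIdeal_isMaximal hf fun g hg =>
    Submodule.mem_colon_singleton.1 (maxIdeal_le hg)

variable {Γ : SimpleGraph σ} {t : ℕ} {f : MvPolynomial σ k}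

lemma X_mul_X_mem_edgeIdeal {i j : σ} (hij : Γ.Adj i j) :
    (X i * X j : MvPolynomial σ k) ∈ edgeIdeal k Γ :=
  Ideal.subset_span ⟨i, j, hij, rfl⟩

lemma edgeIdeal_le_idealOfVars_sq : edgeIdeal k Γ ≤ idealOfVars σ k ^ 2 := by
  rw [edgeIdeal, Ideal.span_le, pow_two]
  rintro _ ⟨i, j, -, rfl⟩
  exact Ideal.mul_mem_mul (Ideal.subset_span ⟨i, rfl⟩) (Ideal.subset_span ⟨j, rfl⟩)

lemma notMem_edgeIdeal_pow_of_isHomogeneous {d : ℕ} (hf : f.IsHomogeneous d) (hf0 : f ≠ 0)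
    (hd : d < 2 * t) : f ∉ edgeIdeal k Γ ^ t := by
  intro hfI
  have hfm : f ∈ idealOfVars σ k ^ (2 * t) := by
    rw [pow_mul]
    exact Ideal.pow_right_mono edgeIdeal_le_idealOfVars_sq t hfI
  obtain ⟨a, ha⟩ := support_nonempty.2 hf0
  have hdeg : a.degree = d := (hf.degree_eq_sum_deg_support ha).symm
  have := (mem_pow_idealOfVars_iff _ _).1 hfm a ha
  lia

/-- `f` is a candidate, relative to the vertex set `U`, for a socle element of `R/I ^ (t + 1)`:
a nonzero form of degree `2 * t + 1` that multiplies the variable of each neighbour of `U` into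
`I ^ (t + 1)`. It is a genuine socle element as soon as `U` is dominating, because the vertices of
`U` are themselves required to have neighbours in `U`. The exponent is shifted by one to avoid
subtraction in the degree. -/
structure IsSocleOn (Γ : SimpleGraph σ) (U : Set σ) (t : ℕ) (f : MvPolynomial σ k) : Prop where
  exists_adj : ∀ u ∈ U, ∃ v ∈ U, Γ.Adj v u
  ne_zero : f ≠ 0
  isHomogeneous : f.IsHomogeneous (2 * t + 1)
  mul_X_mem : ∀ u ∈ U, ∀ i, Γ.Adj u i → f * X i ∈ edgeIdeal k Γ ^ (t + 1)

namespace IsSocleOn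

variable {U : Set σ}

lemma depthZero (hf : IsSocleOn Γ U t f) (hU : Dominating Γ U) :
    DepthZero k (edgeIdeal k Γ ^ (t + 1)) := by
  refine depthZero_of_mul_X_mem
    (notMem_edgeIdeal_pow_of_isHomogeneous hf.isHomogeneous hf.ne_zero (by lia)) fun i => ?_
  obtain ⟨u, hu, hui⟩ : ∃ u ∈ U, Γ.Adj u i := by
    by_cases hi : i ∈ U
    · exact hf.exists_adj i hi
    · exact hU i hi
  exact hf.mul_X_mem u hu i hui

lemma mul_edge (hf : IsSocleOn Γ U t f) {w v : σ} (hw : w ∈ U) (hwv : Γ.Adj w v) :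
    IsSocleOn Γ (insert v U) (t + 1) (f * (X w * X v)) where
  exists_adj := by
    rintro u (rfl | hu)
    · exact ⟨w, Or.inr hw, hwv⟩
    · obtain ⟨u', hu', hadj⟩ := hf.exists_adj u hu
      exact ⟨u', Or.inr hu', hadj⟩
  ne_zero := mul_ne_zero hf.ne_zero (mul_ne_zero (X_ne_zero w) (X_ne_zero v))
  isHomogeneous := by
    convert hf.isHomogeneous.mul ((isHomogeneous_X k w).mul (isHomogeneous_X k v)) using 1
    ring
  mul_X_mem := by
    rintro u (rfl | hu) i hui
    · obtain ⟨w', hw', hadj⟩ := hf.exists_adj w hw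
      rw [show f * (X w * X u) * X i = f * X w * (X u * X i) by ring, pow_succ]
      exact Ideal.mul_mem_mul (hf.mul_X_mem w' hw' w hadj) (X_mul_X_mem_edgeIdeal hui)
    · rw [show f * (X w * X v) * X i = f * X i * (X w * X v) by ring, pow_succ]
      exact Ideal.mul_mem_mul (hf.mul_X_mem u hu i hui) (X_mul_X_mem_edgeIdeal hwv)

lemma exists_union_range (hf : IsSocleOn Γ U t f) {s : ℕ} {p : Fin (s + 1) → σ} (hp0 : p 0 ∈ U)
    (hp : ∀ i : Fin s, Γ.Adj (p i.castSucc) (p i.succ)) :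
    ∃ g : MvPolynomial σ k, IsSocleOn Γ (U ∪ Set.range p) (t + s) g := by
  induction s generalizing U t f with
  | zero =>
    have hrange : U ∪ Set.range p = U := by simpa [Set.range_unique] using hp0
    exact ⟨f, by rwa [hrange]⟩
  | succ s ih =>
    obtain ⟨g, hg⟩ := ih (hf.mul_edge hp0 (hp 0)) (p := Fin.tail p) (Set.mem_insert _ _)
      fun i => hp i.succ
    have hrange : insert (p 1) U ∪ Set.range (Fin.tail p) = U ∪ Set.range p := by
      have hp1 : p 1 ∈ Set.range (Fin.tail p) := ⟨0, rfl⟩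
      rw [Fin.range_fin_succ p]
      grind
    refine ⟨g, ?_⟩
    rwa [← hrange, show t + (s + 1) = t + 1 + s by ring]

lemma exists_add (hf : IsSocleOn Γ U t f) (hU : U.Nonempty) (r : ℕ) :
    ∃ g : MvPolynomial σ k, IsSocleOn Γ U (t + r) g := by
  obtain ⟨v, hv⟩ := hU
  obtain ⟨w, hw, hwv⟩ := hf.exists_adj v hv
  induction r with
  | zero => exact ⟨f, hf⟩
  | succ r ih =>
    obtain ⟨g, hg⟩ := ih
    refine ⟨g * (X w * X v), ?_⟩
    rw [← Set.insert_eq_of_mem hv]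
    exact hg.mul_edge hw hwv

end IsSocleOn

lemma isSocleOn_triangle {u₁ u₂ u₃ : σ} (h12 : Γ.Adj u₁ u₂) (h13 : Γ.Adj u₁ u₃)
    (h23 : Γ.Adj u₂ u₃) :
    IsSocleOn Γ {u₁, u₂, u₃} 1 (X u₁ * X u₂ * X u₃ : MvPolynomial σ k) where
  exists_adj := by
    rintro u (rfl | rfl | rfl)
    · exact ⟨u₂, by simp, h12.symm⟩
    · exact ⟨u₁, by simp, h12⟩
    · exact ⟨u₁, by simp, h13⟩
  ne_zero := mul_ne_zero (mul_ne_zero (X_ne_zero u₁) (X_ne_zero u₂)) (X_ne_zero u₃)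
  isHomogeneous :=
    ((isHomogeneous_X k u₁).mul (isHomogeneous_X k u₂)).mul (isHomogeneous_X k u₃)
  mul_X_mem := by
    have mul_mem {a b c i : σ} (hab : Γ.Adj a b) (hci : Γ.Adj c i) :
        (X a * X b * (X c * X i) : MvPolynomial σ k) ∈ edgeIdeal k Γ ^ (1 + 1) := by
      rw [pow_succ, pow_one]
      exact Ideal.mul_mem_mul (X_mul_X_mem_edgeIdeal hab) (X_mul_X_mem_edgeIdeal hci)
    rintro u (rfl | rfl | rfl) i hui
    · convert mul_mem h23 hui using 1
      ring
    · convert mul_mem h13 hui using 1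
      ring
    · convert mul_mem h12 hui using 1
      ring

end

theorem stmt0_general (k : Type) [Field k] {σ : Type} {Γ : SimpleGraph σ} {u₁ u₂ u₃ : σ}
    (h12 : Γ.Adj u₁ u₂) (h13 : Γ.Adj u₁ u₃) (h23 : Γ.Adj u₂ u₃) {s : ℕ} {p : Fin (s + 1) → σ}
    (hpath : ∀ i : Fin s, Γ.Adj (p i.castSucc) (p i.succ))
    (hp0 : p 0 ∈ ({u₁, u₂, u₃} : Set σ))
    (hdom : Dominating Γ (({u₁, u₂, u₃} : Set σ) ∪ Set.range p)) {t : ℕ} (ht : s + 2 ≤ t) :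
    DepthZero k (edgeIdeal k Γ ^ t) := by
  obtain ⟨f, hf⟩ := (isSocleOn_triangle (k := k) h12 h13 h23).exists_union_range hp0 hpath
  obtain ⟨g, hg⟩ := hf.exists_add ⟨p 0, Or.inl hp0⟩ (t - (s + 2))
  convert hg.depthZero hdom using 2
  lia

/-- If `Γ` contains a triangle `C` together with a path of length `s`
meeting `C` only at its initial vertex, and the union of the vertex sets of the triangle
and the path is dominating in `Γ`, then `depth R/I^t = 0` (the maximal graded ideal is an
associated prime of `R/I^t`) for all `t ≥ s + 2`. -/
theorem stmt0 (k : Type) [Field k] (n : ℕ) (Γ : SimpleGraph (Fin n))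
    (hiso : NoIsolated Γ)
    (u₁ u₂ u₃ : Fin n) (h12 : Γ.Adj u₁ u₂) (h13 : Γ.Adj u₁ u₃) (h23 : Γ.Adj u₂ u₃)
    (s : ℕ) (p : Fin (s + 1) → Fin n) (hinj : Function.Injective p)
    (hpath : ∀ i : Fin s, Γ.Adj (p i.castSucc) (p i.succ))
    (hp0 : p 0 ∈ ({u₁, u₂, u₃} : Set (Fin n)))
    (hpC : ∀ i : Fin (s + 1), i ≠ 0 → p i ∉ ({u₁, u₂, u₃} : Set (Fin n)))
    (hdom : Dominating Γ (({u₁, u₂, u₃} : Set (Fin n)) ∪ Set.range p))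
    (t : ℕ) (ht : s + 2 ≤ t) :
    DepthZero k ((edgeIdeal k Γ) ^ t) := by
  exact stmt0_general k h12 h13 h23 hpath hp0 hdom ht

end
end

section
/- Let t ≥ 1 and a ∈ ℕ^n. If F ⊆ V is a facet of the degree complex Δ_a(I^t), then the prime ideal P_F = (x_i : i ∉ F) is an associated prime of R/I^t. -/
open MvPolynomial

noncomputable section

/-!
Let `J` be a monomial ideal. A set `F` is a face of `Δ_a(J)` exactly when the colon ideal `J : x^a`
contains no product of variables indexed by `F`. As `J : x^a` is again a monomial ideal, this says
`J : x^a ⊆ P_F`. If `F` is a facet and `i ∉ F`, then `J : x^a` contains a product of variables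
indexed by `F ∪ {i}`; a prime between `J : x^a` and `P_F` contains one of these variables, which
must be `x_i`. So `P_F` is minimal over `J : x^a`, hence associated to `R/J`.
-/

section CommutativeAlgebra

variable {R : Type*}

theorem exists_mem_of_not_disjoint_closure [CommSemiring R] {q : Ideal R} [q.IsPrime] {s : Set R}
    (h : ¬ Disjoint (Submonoid.closure s : Set R) q) : ∃ x ∈ s, x ∈ q := by
  by_contra! hs
  have closure_le : Submonoid.closure s ≤ q.primeCompl := Submonoid.closure_le.2 hs
  exact h (Set.disjoint_left.2 fun _ hx ↦ closure_le hx)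

theorem bot_colon_mk_eq_colon [CommRing R] (J : Ideal R) (x : R) :
    (⊥ : Submodule R (R ⧸ J)).colon {Ideal.Quotient.mk J x} = J.colon {x} := by
  ext r
  rw [Submodule.mem_colon_singleton, Submodule.mem_colon_singleton, Submodule.mem_bot,
    ← Ideal.Quotient.eq_zero_iff_mem]
  rfl

theorem mem_associatedPrimes_quotient_of_mem_minimalPrimes_colon [CommRing R] [IsNoetherianRing R]
    {J P : Ideal R} {x : R} (hP : P ∈ (J.colon {x}).minimalPrimes) :
    P ∈ associatedPrimes R (R ⧸ J) := by
  rw [← bot_colon_mk_eq_colon] at hP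
  exact isAssociatedPrime_iff.2 ⟨hP.1.1, Submodule.exists_eq_colon_of_mem_minimalPrimes hP⟩

end CommutativeAlgebra

section Variables

variable {σ R : Type*}

theorem ker_killCompl_subtype_val_compl [CommSemiring R] (s : Set σ) :
    RingHom.ker (killCompl (R := R) (Subtype.val_injective (p := (· ∈ sᶜ)))) =
      Ideal.span (X '' s) := by
  ext f
  have mem_range_iff (m : σ →₀ ℕ) :
      m ∈ Set.range (Finsupp.mapDomain (Subtype.val : ↥sᶜ → σ)) ↔ ∀ i ∈ s, m i = 0 := by
    rw [Finsupp.mem_range_mapDomain_iff _ Subtype.val_injective]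
    simp
  rw [RingHom.mem_ker, mem_ideal_span_X_image, MvPolynomial.ext_iff]
  simp only [coeff_killCompl, coeff_zero]
  rw [← Set.forall_mem_range (p := fun m ↦ coeff m f = 0)]
  refine forall_congr' fun m ↦ ?_
  rw [mem_range_iff, mem_support_iff]
  grind

theorem isPrime_span_X_image [CommRing R] [IsDomain R] (s : Set σ) :
    (Ideal.span (X '' s : Set (MvPolynomial σ R))).IsPrime := by
  rw [← ker_killCompl_subtype_val_compl]
  exact RingHom.ker_isPrime _

theorem X_mem_span_X_image [CommSemiring R] [Nontrivial R] {s : Set σ} {i : σ} :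
    (X i : MvPolynomial σ R) ∈ Ideal.span (X '' s) ↔ i ∈ s := by
  simp [mem_ideal_span_X_image, support_X, Finsupp.single_apply_ne_zero]

theorem monomial_mem_closure_X_image [CommSemiring R] {s : Set σ} {m : σ →₀ ℕ}
    (hm : ∀ i ∉ s, m i = 0) :
    monomial m (1 : R) ∈ Submonoid.closure (X '' s : Set (MvPolynomial σ R)) := by
  rw [← prod_X_pow_eq_monomial]
  refine prod_mem fun i hi ↦ pow_mem (Submonoid.subset_closure (Set.mem_image_of_mem X ?_)) _
  exact not_imp_comm.1 (hm i) (Finsupp.mem_support_iff.1 hi)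

end Variables

/-- An ideal of a polynomial ring is a monomial ideal if it is generated by monomials with
coefficient `1`. -/
def IsMonomialIdeal {σ R : Type*} [CommSemiring R] (J : Ideal (MvPolynomial σ R)) : Prop :=
  ∃ S : Set (σ →₀ ℕ), J = Ideal.span ((fun m ↦ monomial m (1 : R)) '' S)

section MonomialIdeal

variable {σ R : Type*} [CommSemiring R] {J K : Ideal (MvPolynomial σ R)}

theorem isMonomialIdeal_iff :
    IsMonomialIdeal J ↔ ∀ f ∈ J, ∀ m ∈ f.support, monomial m (1 : R) ∈ J := by
  refine ⟨?_, fun hJ ↦ ⟨{m | monomial m (1 : R) ∈ J}, le_antisymm (fun f hf ↦ ?_) ?_⟩⟩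
  · rintro ⟨S, rfl⟩ f hf m hm
    obtain ⟨d, hd, hdm⟩ := mem_ideal_span_monomial_image.1 hf m hm
    refine mem_ideal_span_monomial_image.2 fun e he ↦ ⟨d, hd, ?_⟩
    rwa [Finset.mem_singleton.1 (support_monomial_subset he)]
  · exact mem_ideal_span_monomial_image.2 fun m hm ↦ ⟨m, hJ f hf m hm, le_rfl⟩
  · rw [Ideal.span_le]
    rintro _ ⟨m, hm, rfl⟩
    exact hm

namespace IsMonomialIdeal

theorem mul (hJ : IsMonomialIdeal J) (hK : IsMonomialIdeal K) : IsMonomialIdeal (J * K) := by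
  obtain ⟨S, rfl⟩ := hJ
  obtain ⟨T, rfl⟩ := hK
  refine ⟨Set.image2 (· + ·) S T, ?_⟩
  rw [Ideal.span_mul_span', ← Set.image2_mul, Set.image2_image_left, Set.image2_image_right,
    Set.image_image2]
  simp only [monomial_mul, mul_one]

theorem pow (hJ : IsMonomialIdeal J) (t : ℕ) : IsMonomialIdeal (J ^ t) := by
  induction t with
  | zero => exact ⟨{0}, by simp⟩
  | succ t ih => exact pow_succ J t ▸ ih.mul hJ

theorem colon_monomial (hJ : IsMonomialIdeal J) (d : σ →₀ ℕ) :
    IsMonomialIdeal (J.colon {monomial d (1 : R)}) := by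
  rw [isMonomialIdeal_iff] at hJ ⊢
  intro f hf m hm
  rw [Submodule.mem_colon_singleton, smul_eq_mul] at hf ⊢
  have add_mem_support : m + d ∈ (f * monomial d 1).support := by
    rwa [mem_support_iff, coeff_mul_monomial, mul_one, ← mem_support_iff]
  simpa only [monomial_mul, mul_one] using hJ _ hf _ add_mem_support

theorem le_span_X_image_compl_of_disjoint (hJ : IsMonomialIdeal J) {s : Set σ}
    (h : Disjoint (Submonoid.closure (X (R := R) '' s) : Set (MvPolynomial σ R)) J) :
    J ≤ Ideal.span (X '' sᶜ) := by
  intro f hf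
  rw [mem_ideal_span_X_image]
  intro m hm
  by_contra! hms
  exact Set.disjoint_left.1 h (monomial_mem_closure_X_image hms)
    (isMonomialIdeal_iff.1 hJ f hf m hm)

end IsMonomialIdeal

end MonomialIdeal

theorem isMonomialIdeal_edgeIdeal (k : Type) [Field k] {σ : Type} (Γ : SimpleGraph σ) :
    IsMonomialIdeal (edgeIdeal k Γ) := by
  refine ⟨{m | ∃ i j, Γ.Adj i j ∧ m = Finsupp.single i 1 + Finsupp.single j 1}, ?_⟩
  rw [edgeIdeal]
  congr 1
  ext f
  simp only [Set.mem_image, Set.mem_ofPred_eq, X, monomial_mul, mul_one]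
  constructor
  · rintro ⟨i, j, hij, rfl⟩
    exact ⟨_, ⟨i, j, hij, rfl⟩, rfl⟩
  · rintro ⟨_, ⟨i, j, hij, rfl⟩, rfl⟩
    exact ⟨i, j, hij, rfl⟩

theorem IsFacet.insert_notMem {σ : Type} [DecidableEq σ] {Δ : Set (Finset σ)} {F : Finset σ}
    (hF : IsFacet Δ F) {i : σ} (hi : i ∉ F) : insert i F ∉ Δ := fun h ↦
  hi (Finset.insert_eq_self.1 (hF.2 _ h (Finset.subset_insert i F)))

section DegreeComplex

variable {k : Type} [Field k] {σ : Type} [Fintype σ] {J : Ideal (MvPolynomial σ k)} {a : σ → ℕ}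
  {F : Finset σ}

theorem xPow_eq_monomial (a : σ → ℕ) :
    xPow k a = monomial (Finsupp.equivFunOnFinite.symm a) 1 := by
  rw [monomial_eq, Finsupp.prod_fintype _ _ (by simp)]
  simp [xPow]

theorem mem_degComplex_iff_disjoint_colon :
    F ∈ degComplex k J a ↔
      Disjoint (Submonoid.closure (X (R := k) '' (F : Set σ)) : Set (MvPolynomial σ k))
        (J.colon {xPow k a}) := by
  rw [degComplex, Set.mem_ofPred_eq, IsLocalization.algebraMap_mem_map_algebraMap_iff
    (Submonoid.closure (X '' (F : Set σ))), Set.disjoint_left]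
  simp

variable [DecidableEq σ]

theorem PF_eq_span_X_image_compl (F : Finset σ) : PF k F = Ideal.span (X '' (F : Set σ)ᶜ) := by
  rw [PF]
  congr 1
  ext f
  simp [eq_comm]

theorem colon_xPow_le_PF (hJ : IsMonomialIdeal J) (hF : F ∈ degComplex k J a) :
    J.colon {xPow k a} ≤ PF k F := by
  rw [mem_degComplex_iff_disjoint_colon] at hF
  rw [xPow_eq_monomial] at hF ⊢
  rw [PF_eq_span_X_image_compl]
  exact (hJ.colon_monomial _).le_span_X_image_compl_of_disjoint hF

theorem IsFacet.PF_le_of_colon_xPow_le (hF : IsFacet (degComplex k J a) F)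
    {q : Ideal (MvPolynomial σ k)} [q.IsPrime] (hJq : J.colon {xPow k a} ≤ q) (hq : q ≤ PF k F) :
    PF k F ≤ q := by
  refine Ideal.span_le.2 ?_
  rintro _ ⟨i, hi, rfl⟩
  have not_disjoint := mt mem_degComplex_iff_disjoint_colon.2 (hF.insert_notMem hi)
  obtain ⟨_, ⟨j, hj, rfl⟩, hjq⟩ :=
    exists_mem_of_not_disjoint_closure fun h ↦ not_disjoint (h.mono_right hJq)
  have j_notMem : j ∉ F := by
    rw [PF_eq_span_X_image_compl] at hq
    exact X_mem_span_X_image.1 (hq hjq)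
  rwa [← (Finset.mem_insert.1 hj).resolve_right j_notMem]

theorem stmt2_general (hJ : IsMonomialIdeal J) (hF : IsFacet (degComplex k J a) F) :
    PF k F ∈ associatedPrimes (MvPolynomial σ k) (MvPolynomial σ k ⧸ J) := by
  have isPrime : (PF k F).IsPrime := PF_eq_span_X_image_compl (k := k) F ▸ isPrime_span_X_image _
  refine mem_associatedPrimes_quotient_of_mem_minimalPrimes_colon (x := xPow k a)
    ⟨⟨isPrime, colon_xPow_le_PF hJ hF.1⟩, ?_⟩
  rintro q ⟨_, hJq⟩ hq
  exact hF.PF_le_of_colon_xPow_le hJq hq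

end DegreeComplex

/-- If `F` is a facet of the degree complex `Δ_a(I^t)`, then
`P_F = (x_i : i ∉ F)` is an associated prime of `R/I^t`. -/
theorem stmt2 (k : Type) [Field k] (n : ℕ) (Γ : SimpleGraph (Fin n))
    (hiso : NoIsolated Γ) (t : ℕ) (ht : 1 ≤ t) (a : Fin n → ℕ) (F : Finset (Fin n))
    (hF : IsFacet (degComplex k ((edgeIdeal k Γ) ^ t) a) F) :
    PF k F ∈ associatedPrimes (MvPolynomial (Fin n) k)
      (MvPolynomial (Fin n) k ⧸ (edgeIdeal k Γ) ^ t) := by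
  exact stmt2_general ((isMonomialIdeal_edgeIdeal k Γ).pow t) hF

end
end

section
/- Let t ≥ 1 and a ∈ ℕ^n. A subset F ⊆ V is a facet of the degree complex Δ_a(I^{(t)}) of the t-th symbolic power if and only if F is a maximal independent set of Γ and Σ_{i ∉ F} a_i < t. -/
open MvPolynomial

noncomputable section

/-!
Localization commutes with finite intersections, so the degree complex of `⋂ P_F^t` is the union of
the degree complexes of the `P_F^t`. Substituting `1` for the `x_i` with `i ∈ F` and a single
variable `T` for the others sends `P_F^t` into `(T^t)`, every product of inverted variables `x_i`,
`i ∈ G ⊆ F`, to `1`, and `x^a` to `T` raised to the sum of the `a_i` with `i ∉ F`. Hence the degree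
complex of `P_F^t` is the full simplex on `F` if that sum is less than `t`, and empty otherwise. The
degree complex of the symbolic power is therefore generated by the maximal independent sets
satisfying the inequality, and these form an antichain.
-/

section Facets

variable {σ : Type}

theorem isFacet_iff_maximal {Δ : Set (Finset σ)} {F : Finset σ} :
    IsFacet Δ F ↔ Maximal (· ∈ Δ) F :=
  and_congr_right fun _ => forall₂_congr fun _ _ =>
    ⟨fun h hFG => (h hFG).le, fun h hFG => (h hFG).antisymm hFG⟩

theorem isAntichain_isMaxIndep [Fintype σ] [DecidableEq σ] (Γ : SimpleGraph σ) :
    IsAntichain (· ≤ ·) {F | IsMaxIndep Γ F} :=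
  fun _ hF _ hG hne hFG => hne (hF.2 _ hG.1 hFG).symm

end Facets

section DegreeComplex

variable {k : Type} [Field k] {σ : Type} [Fintype σ]

theorem mem_degComplex_iff {J : Ideal (MvPolynomial σ k)} {a : σ → ℕ} {G : Finset σ} :
    G ∈ degComplex k J a ↔
      ∀ s ∈ Submonoid.closure ((fun i => (X i : MvPolynomial σ k)) '' (G : Set σ)),
        s * xPow k a ∉ J := by
  rw [degComplex, Set.mem_ofPred_eq, IsLocalization.algebraMap_mem_map_algebraMap_iff
    (Submonoid.closure ((fun i => (X i : MvPolynomial σ k)) '' (G : Set σ)))]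
  push Not
  rfl

theorem degComplex_finset_inf {ι : Type*} (s : Finset ι) (J : ι → Ideal (MvPolynomial σ k))
    (a : σ → ℕ) : degComplex k (s.inf J) a = ⋃ i ∈ s, degComplex k (J i) a := by
  ext G
  have map_inf : (s.inf J).map (algebraMap _ (locAt k G)) =
      s.inf fun i => (J i).map (algebraMap _ (locAt k G)) :=
    map_finset_inf (IsLocalization.mapFrameHom
      (Submonoid.closure ((fun i => (X i : MvPolynomial σ k)) '' (G : Set σ))) (locAt k G)) s J
  simp [degComplex, map_inf, Submodule.mem_finsetInf]

end DegreeComplex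

section Substitution

variable {k : Type*} [CommSemiring k] {σ : Type*} [DecidableEq σ] {F G : Finset σ}

variable (k) in
/-- The substitution `x_i ↦ 1` for `i ∈ F` and `x_i ↦ T` for `i ∉ F`, with values in `k[T]`. It
records the degree of a monomial in the variables generating `P_F`, and is compatible with
inverting the variables indexed by `F`. -/
def substOneOn (F : Finset σ) : MvPolynomial σ k →ₐ[k] Polynomial k :=
  aeval fun i => if i ∈ F then 1 else Polynomial.X

theorem substOneOn_X_of_mem {i : σ} (hi : i ∈ F) : substOneOn k F (X i) = 1 := by
  simp [substOneOn, hi]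

theorem substOneOn_X_of_notMem {i : σ} (hi : i ∉ F) :
    substOneOn k F (X i) = Polynomial.X := by
  simp [substOneOn, hi]

theorem substOneOn_eq_one_of_mem_closure (hGF : G ⊆ F) {s : MvPolynomial σ k}
    (hs : s ∈ Submonoid.closure ((fun i => (X i : MvPolynomial σ k)) '' (G : Set σ))) :
    substOneOn k F s = 1 := by
  have closure_le : Submonoid.closure ((fun i => (X i : MvPolynomial σ k)) '' (G : Set σ)) ≤
      MonoidHom.mker (substOneOn k F) := by
    rw [Submonoid.closure_le, Set.image_subset_iff]
    exact fun i hi => substOneOn_X_of_mem (hGF hi)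
  exact closure_le hs

end Substitution

section PrimePowers

variable {k : Type} [Field k] {σ : Type} [Fintype σ] [DecidableEq σ] {F G : Finset σ}

theorem X_mem_PF {i : σ} (hi : i ∉ F) : (X i : MvPolynomial σ k) ∈ PF k F :=
  Ideal.subset_span ⟨i, hi, rfl⟩

theorem xPow_mem_PF_pow (F : Finset σ) (a : σ → ℕ) :
    xPow k a ∈ PF k F ^ ∑ i ∈ Fᶜ, a i := by
  rw [xPow, ← Finset.prod_mul_prod_compl F, ← Finset.prod_pow_eq_pow_sum]
  exact Ideal.mul_mem_left _ _ <| Ideal.prod_mem_prod fun i hi =>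
    Ideal.pow_mem_pow (X_mem_PF (Finset.mem_compl.mp hi)) _

theorem substOneOn_xPow (F : Finset σ) (a : σ → ℕ) :
    substOneOn k F (xPow k a) = Polynomial.X ^ ∑ i ∈ Fᶜ, a i := by
  have prod_on : ∏ i ∈ F, substOneOn k F (X i) ^ a i = 1 :=
    Finset.prod_eq_one fun i hi => by rw [substOneOn_X_of_mem hi, one_pow]
  have prod_off : ∏ i ∈ Fᶜ, substOneOn k F (X i) ^ a i = Polynomial.X ^ ∑ i ∈ Fᶜ, a i := by
    rw [← Finset.prod_pow_eq_pow_sum]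
    exact Finset.prod_congr rfl fun i hi => by
      rw [substOneOn_X_of_notMem (Finset.mem_compl.mp hi)]
  simp only [xPow, map_prod, map_pow]
  rw [← Finset.prod_mul_prod_compl F, prod_on, prod_off, one_mul]

theorem X_pow_dvd_substOneOn {t : ℕ} {p : MvPolynomial σ k} (hp : p ∈ PF k F ^ t) :
    Polynomial.X ^ t ∣ substOneOn k F p := by
  have map_PF_le : (PF k F).map (substOneOn k F) ≤ Ideal.span {Polynomial.X} := by
    rw [PF, Ideal.map_span, Ideal.span_le]
    rintro _ ⟨_, ⟨i, hi, rfl⟩, rfl⟩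
    rw [substOneOn_X_of_notMem hi]
    exact Ideal.mem_span_singleton_self _
  rw [← Ideal.mem_span_singleton, ← Ideal.span_singleton_pow]
  apply Ideal.pow_right_mono map_PF_le t
  rw [← Ideal.map_pow]
  exact Ideal.mem_map_of_mem _ hp

theorem mem_degComplex_PF_pow_iff {t : ℕ} {a : σ → ℕ} :
    G ∈ degComplex k (PF k F ^ t) a ↔ G ⊆ F ∧ ∑ i ∈ Fᶜ, a i < t := by
  rw [mem_degComplex_iff]
  refine ⟨fun h => ⟨fun i hiG => ?_, ?_⟩, ?_⟩
  · by_contra hiF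
    exact h (X i ^ t) (pow_mem (Submonoid.subset_closure (Set.mem_image_of_mem _ hiG)) t)
      (Ideal.mul_mem_right _ _ (Ideal.pow_mem_pow (X_mem_PF hiF) t))
  · by_contra! hle
    have xPow_mem : xPow k a ∈ PF k F ^ t := Ideal.pow_le_pow_right hle (xPow_mem_PF_pow F a)
    exact h 1 (one_mem _) (Ideal.mul_mem_left _ _ xPow_mem)
  · rintro ⟨hGF, hlt⟩ s hs hmem
    have hdvd : (Polynomial.X : Polynomial k) ^ t ∣ Polynomial.X ^ ∑ i ∈ Fᶜ, a i := by
      simpa only [map_mul, substOneOn_eq_one_of_mem_closure hGF hs, one_mul, substOneOn_xPow]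
        using X_pow_dvd_substOneOn hmem
    exact hlt.not_ge
      ((pow_dvd_pow_iff Polynomial.X_ne_zero Polynomial.not_isUnit_X).mp hdvd)

theorem degComplex_biInf_PF_pow (𝓕 : Set (Finset σ)) (t : ℕ) (a : σ → ℕ) :
    degComplex k (⨅ F ∈ 𝓕, PF k F ^ t) a =
      lowerClosure {F | F ∈ 𝓕 ∧ ∑ i ∈ Fᶜ, a i < t} := by
  have biInf_eq : ⨅ F ∈ 𝓕, PF k F ^ t = 𝓕.toFinite.toFinset.inf fun F => PF k F ^ t := by
    simp only [Finset.inf_eq_iInf, Set.Finite.mem_toFinset]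
  ext G
  simp only [biInf_eq, degComplex_finset_inf, Set.mem_iUnion, Set.Finite.mem_toFinset,
    mem_degComplex_PF_pow_iff, SetLike.mem_coe, mem_lowerClosure, Set.mem_ofPred_eq, exists_prop]
  exact exists_congr fun F => by tauto

end PrimePowers

theorem stmt3_general (k : Type) [Field k] {σ : Type} [Fintype σ] [DecidableEq σ]
    (Γ : SimpleGraph σ) (t : ℕ) (a : σ → ℕ) (F : Finset σ) :
    IsFacet (degComplex k (symbPow k Γ t) a) F ↔
      (IsMaxIndep Γ F ∧ ∑ i ∈ Fᶜ, a i < t) := by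
  have generators_antichain :
      IsAntichain (· ≤ ·) {F | IsMaxIndep Γ F ∧ ∑ i ∈ Fᶜ, a i < t} :=
    (isAntichain_isMaxIndep Γ).subset fun _ hF => hF.1
  rw [isFacet_iff_maximal, symbPow, degComplex_biInf_PF_pow]
  exact generators_antichain.maximal_mem_lowerClosure_iff_mem

/-- `F` is a facet of the degree complex `Δ_a(I^{(t)})` of the `t`-th
symbolic power if and only if `F` is a maximal independent set of `Γ` and
`Σ_{i ∉ F} a_i < t`. -/
theorem stmt3 (k : Type) [Field k] (n : ℕ) (Γ : SimpleGraph (Fin n))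
    (hiso : NoIsolated Γ) (t : ℕ) (ht : 1 ≤ t) (a : Fin n → ℕ) (F : Finset (Fin n)) :
    IsFacet (degComplex k (symbPow k Γ t) a) F ↔
      (IsMaxIndep Γ F ∧ ∑ i ∈ Fᶜ, a i < t) :=
  stmt3_general k Γ t a F

end
end

section
/- Let Γ be a connected non-bipartite graph having at least one odd cycle whose vertex set is not dominating. Assume there exist an odd cycle C of length 2r+1 and a vertex v with v ∉ C and v not adjacent to any vertex of C, such that the induced subgraph Γ_{V∖N[v]} is connected. Then: (1) if the vertex set of C equals V∖N[v], then H^1_m(R/I^t) ≠ 0 for all t ≥ r+1; (2) if the vertex set of C is a proper subset of V∖N[v], then H^1_m(R/I^t) ≠ 0 for all t ≥ n − |N[v]| − r − 1. -/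
open MvPolynomial

noncomputable section

/-!
Write `U = V ∖ N[v]`. Call a monomial `x^a` supported on a set `W` *factor-critical* on `W` if
`x^a / x_w` is a product of `t` edges for every `w ∈ W`; its degree is then `2t + 1`. The product
of the vertices of an odd cycle of length `2r + 1` is factor-critical with `t = r`, and multiplying
by an edge `x_u x_w` with `u ∈ W` gives a factor-critical monomial on `W ∪ {w}` with `t + 1` in
place of `t`. Since `Γ_U` is connected, the cycle grows one vertex at a time to a set `W` equal to
`U`, or missing just one vertex of `U`, so that every vertex of `U` has a neighbor in `W`.

Such an `x^a` lies in `I^t`, and `x_j x^a ∈ I^(t+1)` for all `j ∈ U`. Also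
`x_i (x_v x^a) ∈ I^(t+1)` for `i ∈ N(v)`, because `x_i x_v` is an edge. Hence `x^a / x_v` is a
Čech cocycle of `R / I^(t+1)`, zero on the charts other than that of `x_v`. It is not a
coboundary: under the substitution `x_v ↦ y`, `x_i ↦ T²` for `i ∈ N(v)` and `x_j ↦ T` for
`j ∈ U`, the ideal `I^(t+1)` lands in `(T^(2t+2))`, while `y^s T^(2t+1) - y^(s+1) g` has a
nonzero coefficient at `T^(2t+1)` for every `g`.
-/

section HomologicalAlgebra

open CategoryTheory Limits Opposite

universe u w

theorem exists_d_comp_eq_of_homologyMap_comp_eq_zero {D : Type*} [Category* D] [Abelian D]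
    {K L : ChainComplex D ℕ} (γ : K ⟶ L) {T : D} [Injective T] {z : L.X 1 ⟶ T}
    (hz : L.d 2 1 ≫ z = 0)
    (h : HomologicalComplex.homologyMap γ 1 ≫ L.homologyι 1 ≫
      L.descOpcycles z 2 (by simp) hz = 0) :
    ∃ y : K.X 0 ⟶ T, K.d 1 0 ≫ y = γ.f 1 ≫ z := by
  have hcycles : K.iCycles 1 ≫ γ.f 1 ≫ z = 0 := by
    simpa using K.homologyπ 1 ≫= h
  have hexact : (ShortComplex.mk (K.iCycles 1) (K.d 1 0) (by simp)).Exact :=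
    ShortComplex.exact_of_f_is_kernel _ (K.cyclesIsKernel 1 0 (by simp))
  exact ⟨hexact.descToInjective _ hcycles, hexact.comp_descToInjective _ hcycles⟩

section ExtOne

variable {R : Type u} [Ring R] {C : Type w} [Category.{u} C] [Abelian C] [Linear R C]
  {A B M : C}

variable (R) in
/-- The complex `Hom(P, M)` in `(ModuleCat R)ᵒᵖ`, whose homology computes `Ext(A, M)` for a
projective resolution `P` of `A`. -/
abbrev opHomComplex (P : ProjectiveResolution A) (M : C) :
    ChainComplex (ModuleCat.{u} R)ᵒᵖ ℕ :=
  (((linearYoneda R C).obj M).rightOp.mapHomologicalComplex (ComplexShape.down ℕ)).obj P.complex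

variable (R) in
/-- The element `z` of `Hom(P₁, M)`, seen as the map `R → Hom(P₁, M)` sending `1` to `z`. -/
def cochainHom {P : ProjectiveResolution A}
    (z : P.complex.X 1 ⟶ M) :
    (opHomComplex R P M).X 1 ⟶ op (ModuleCat.of R R) :=
  Quiver.Hom.op (ModuleCat.ofHom (LinearMap.toSpanSingleton R (P.complex.X 1 ⟶ M) z))

theorem d_comp_cochainHom_eq_zero {P : ProjectiveResolution A} {z : P.complex.X 1 ⟶ M}
    (hz : P.complex.d 2 1 ≫ z = 0) : (opHomComplex R P M).d 2 1 ≫ cochainHom R z = 0 := by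
  apply Quiver.Hom.unop_inj
  apply ModuleCat.hom_ext
  apply LinearMap.ext_ring
  change P.complex.d 2 1 ≫ ((1 : R) • z) = 0
  rw [one_smul, hz]

variable [EnoughProjectives C]

variable (R) in
/-- The class in `Ext¹(A, M)` of a cocycle `z : P₁ ⟶ M`, given as the map
`R → Ext¹(A, M)` sending `1` to that class. -/
def cocycleClassHom {P : ProjectiveResolution A}
    {z : P.complex.X 1 ⟶ M} (hz : P.complex.d 2 1 ≫ z = 0) :
    (((linearYoneda R C).obj M).rightOp.leftDerived 1).obj A ⟶ op (ModuleCat.of R R) :=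
  (P.isoLeftDerivedObj _ 1).hom ≫ (opHomComplex R P M).homologyι 1 ≫
    (opHomComplex R P M).descOpcycles (cochainHom R z) 2 (by simp) (d_comp_cochainHom_eq_zero hz)

variable (R) in
/-- The class in `Ext¹(A, M)` of a cocycle `z : P₁ ⟶ M` of a projective resolution `P` of `A`. -/
def cocycleClass {P : ProjectiveResolution A}
    {z : P.complex.X 1 ⟶ M} (hz : P.complex.d 2 1 ≫ z = 0) :
    ((Ext R C 1).obj (op A)).obj M :=
  (cocycleClassHom R hz).unop.hom (1 : R)

theorem exists_d_comp_eq_lift_comp_of_map_cocycleClass_eq_zero {P : ProjectiveResolution A}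
    {z : P.complex.X 1 ⟶ M} (hz : P.complex.d 2 1 ≫ z = 0) (f : B ⟶ A)
    (Q : ProjectiveResolution B)
    (h : ((Ext R C 1).map f.op).app M (cocycleClass R hz) = 0) :
    ∃ y : Q.complex.X 0 ⟶ M,
      Q.complex.d 1 0 ≫ y = (ProjectiveResolution.lift f Q P).f 1 ≫ z := by
  let F : C ⥤ (ModuleCat.{u} R)ᵒᵖ := ((linearYoneda R C).obj M).rightOp
  let γ := ProjectiveResolution.lift f Q P
  have hmap : (F.leftDerived 1).map f ≫ cocycleClassHom R hz = 0 := by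
    apply Quiver.Hom.unop_inj
    apply ModuleCat.hom_ext
    apply LinearMap.ext_ring
    exact h
  have hnat := ProjectiveResolution.isoLeftDerivedObj_hom_naturality f Q P γ
    (ProjectiveResolution.lift_commutes_zero f Q P) F 1
  have hhomology : (Q.isoLeftDerivedObj F 1).hom ≫ HomologicalComplex.homologyMap
      ((F.mapHomologicalComplex (ComplexShape.down ℕ)).map γ) 1 ≫
      (opHomComplex R P M).homologyι 1 ≫ (opHomComplex R P M).descOpcycles (cochainHom R z) 2
        (by simp) (d_comp_cochainHom_eq_zero hz) = 0 := by
    rw [← hmap, cocycleClassHom, reassoc_of% hnat]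
    rfl
  have : Injective (op (ModuleCat.of R R)) := inferInstance
  have hzero := (cancel_epi (Q.isoLeftDerivedObj F 1).hom).1 (hhomology.trans comp_zero.symm)
  obtain ⟨y, hy⟩ := exists_d_comp_eq_of_homologyMap_comp_eq_zero _
    (d_comp_cochainHom_eq_zero hz) hzero
  refine ⟨y.unop.hom (1 : R), (congrArg (fun q => q.unop.hom (1 : R)) hy).trans ?_⟩
  change γ.f 1 ≫ ((1 : R) • z) = _
  rw [one_smul]

end ExtOne

section IdealQuotient

variable {R : Type u} [CommRing R] {𝔞 𝔟 : Ideal R}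

/-- A lift of the augmentation `P₀ → R/𝔞` of a projective resolution of `R/𝔞` to `R`. -/
def augmentationLift (P : ProjectiveResolution (ModuleCat.of R (R ⧸ 𝔞))) :
    P.complex.X 0 ⟶ ModuleCat.of R R :=
  have : Epi (ModuleCat.ofHom 𝔞.mkQ) := (ModuleCat.epi_iff_surjective _).2 𝔞.mkQ_surjective
  Projective.factorThru (X := ModuleCat.of R (R ⧸ 𝔞)) (P.π.f 0) (ModuleCat.ofHom 𝔞.mkQ)

theorem mk_augmentationLift (P : ProjectiveResolution (ModuleCat.of R (R ⧸ 𝔞)))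
    (x : P.complex.X 0) : Ideal.Quotient.mk 𝔞 (augmentationLift P x) = P.π.f 0 x :=
  have : Epi (ModuleCat.ofHom 𝔞.mkQ) := (ModuleCat.epi_iff_surjective _).2 𝔞.mkQ_surjective
  congrArg (fun f => f.hom x) (Projective.factorThru_comp (X := ModuleCat.of R (R ⧸ 𝔞))
    (P.π.f 0) (ModuleCat.ofHom 𝔞.mkQ))

theorem augmentationLift_d_mem (P : ProjectiveResolution (ModuleCat.of R (R ⧸ 𝔞)))
    (x : P.complex.X 1) : augmentationLift P (P.complex.d 1 0 x) ∈ 𝔞 := by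
  rw [← Ideal.Quotient.eq_zero_iff_mem, mk_augmentationLift]
  exact congrArg (fun f => f.hom x) P.complex_d_comp_π_f_zero

/-- The map `P₁ → 𝔞` induced by the differential of a projective resolution of `R/𝔞`. -/
def dToIdeal (P : ProjectiveResolution (ModuleCat.of R (R ⧸ 𝔞))) : P.complex.X 1 →ₗ[R] 𝔞 :=
  ((augmentationLift P).hom.comp (P.complex.d 1 0).hom).codRestrict 𝔞 (augmentationLift_d_mem P)

theorem d_comp_dToIdeal_eq_zero (P : ProjectiveResolution (ModuleCat.of R (R ⧸ 𝔞)))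
    {M : ModuleCat.{u} R} (φ : 𝔞 →ₗ[R] M) :
    P.complex.d 2 1 ≫ ModuleCat.ofHom (φ ∘ₗ dToIdeal P) = 0 := by
  ext x
  have hx : dToIdeal P (P.complex.d 2 1 x) = 0 := Subtype.ext <| by
    change augmentationLift P ((P.complex.d 2 1 ≫ P.complex.d 1 0) x) = 0
    rw [HomologicalComplex.d_comp_d]
    exact map_zero _
  exact (congrArg φ hx).trans (map_zero φ)

theorem exists_forall_eq_smul_of_d_comp_eq (hle : 𝔟 ≤ 𝔞)
    (P : ProjectiveResolution (ModuleCat.of R (R ⧸ 𝔞)))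
    (Q : ProjectiveResolution (ModuleCat.of R (R ⧸ 𝔟))) {M : ModuleCat.{u} R} (φ : 𝔞 →ₗ[R] M)
    {y : Q.complex.X 0 ⟶ M}
    (hy : Q.complex.d 1 0 ≫ y = (ProjectiveResolution.lift
      (ModuleCat.ofHom (Submodule.factor hle)) Q P).f 1 ≫ ModuleCat.ofHom (φ ∘ₗ dToIdeal P)) :
    ∃ g : M, ∀ (b : R) (hb : b ∈ 𝔟), φ ⟨b, hle hb⟩ = b • g := by
  set f := ModuleCat.ofHom (Submodule.factor hle)
  set γ := ProjectiveResolution.lift f Q P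
  obtain ⟨q, hq⟩ := (ModuleCat.epi_iff_surjective (Q.π.f 0)).1 inferInstance
    (Ideal.Quotient.mk 𝔟 1)
  let a : R := augmentationLift P (γ.f 0 q)
  have ha : a - 1 ∈ 𝔞 := by
    rw [← Ideal.Quotient.mk_eq_mk_iff_sub_mem, mk_augmentationLift]
    have hcomm : P.π.f 0 (γ.f 0 q) = f (Q.π.f 0 q) :=
      congrArg (fun h => h.hom q) (ProjectiveResolution.lift_commutes_zero f Q P)
    rw [hcomm, hq]
    rfl
  refine ⟨y q - φ ⟨a - 1, ha⟩, fun b hb => ?_⟩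
  obtain ⟨x, hx : Q.complex.d 1 0 x = b • q⟩ :=
    (ShortComplex.moduleCat_exact_iff _).1 Q.exact₀ (b • q) <| by
      change Q.π.f 0 (b • q) = 0
      rw [map_smul, hq]
      exact Ideal.Quotient.eq_zero_iff_mem.2 (by simpa using hb)
  have hdx : dToIdeal P (γ.f 1 x) = ⟨b, hle hb⟩ + b • ⟨a - 1, ha⟩ := Subtype.ext <| by
    have hcomm : P.complex.d 1 0 (γ.f 1 x) = γ.f 0 (Q.complex.d 1 0 x) :=
      congrArg (fun h => h x) (γ.comm 1 0)
    change augmentationLift P (P.complex.d 1 0 (γ.f 1 x)) = b + b * (a - 1)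
    rw [hcomm, hx, map_smul, map_smul]
    change b * a = _
    ring
  have hyq : b • y q = φ ⟨b, hle hb⟩ + b • φ ⟨a - 1, ha⟩ := by
    calc b • y q = y (Q.complex.d 1 0 x) := by rw [hx, map_smul]
      _ = φ (dToIdeal P (γ.f 1 x)) := congrArg (fun h => h x) hy
      _ = φ ⟨b, hle hb⟩ + b • φ ⟨a - 1, ha⟩ := by rw [hdx, map_add, map_smul]
  rw [smul_sub, hyq, add_sub_cancel_right]

end IdealQuotient

theorem exists_map_ext_eq_zero_of_subsingleton_localCohomology {R : Type u} [CommRing R]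
    {m : Ideal R} {i : ℕ} {M : ModuleCat.{u} R}
    (h : Subsingleton ((localCohomology m i).obj M)) {j : ℕ}
    (e : ((Ext R (ModuleCat.{u} R) i).obj (op (ModuleCat.of R (R ⧸ m ^ j)))).obj M) :
    ∃ (s : ℕ) (hjs : j ≤ s), ((Ext R (ModuleCat.{u} R) i).map
      (ModuleCat.ofHom (Submodule.factor (Ideal.pow_le_pow_right (I := m) hjs))).op).app M e
        = 0 := by
  let D := localCohomology.diagram (localCohomology.idealPowersDiagram m) i
  let ev := (evaluation (ModuleCat.{u} R) (ModuleCat.{u} R)).obj M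
  have hcolim : IsColimit (ev.mapCocone (colimit.cocone D)) :=
    isColimitOfPreserves ev (colimit.isColimit D)
  have hsub : Subsingleton (ev.mapCocone (colimit.cocone D)).pt := h
  have : PreservesFilteredColimitsOfSize.{0, 0} (forget (ModuleCat.{u} R)) :=
    preservesFilteredColimitsOfSize_shrink.{0, u, 0, u} _
  obtain ⟨s, f, _, hf⟩ := Concrete.isColimit_exists_of_rep_eq _ hcolim
    (i := op (op j)) (j := op (op j)) e 0 (hsub.elim _ _)
  exact ⟨s.unop.unop, leOfHom f.unop.unop, hf.trans (map_zero _)⟩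

/-- `H¹_m(M)` is the colimit of `Hom(m^s, M)` modulo the multiplications `b ↦ b • g`. -/
theorem nontrivial_localCohomology_one_of_forall_ne_smul {R : Type u} [CommRing R] {m : Ideal R}
    {M : ModuleCat.{u} R} {j : ℕ} (φ : ↥(m ^ j) →ₗ[R] M)
    (h : ∀ s (hjs : j ≤ s) (g : M), ∃ (b : R) (hb : b ∈ m ^ s),
      φ ⟨b, Ideal.pow_le_pow_right hjs hb⟩ ≠ b • g) :
    Nontrivial ((localCohomology m 1).obj M) := by
  by_contra htriv
  rw [not_nontrivial_iff_subsingleton] at htriv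
  let P := projectiveResolution (ModuleCat.of R (R ⧸ m ^ j))
  obtain ⟨s, hjs, hs⟩ := exists_map_ext_eq_zero_of_subsingleton_localCohomology htriv
    (cocycleClass R (d_comp_dToIdeal_eq_zero P φ))
  obtain ⟨y, hy⟩ := exists_d_comp_eq_lift_comp_of_map_cocycleClass_eq_zero _ _
    (projectiveResolution (ModuleCat.of R (R ⧸ m ^ s))) hs
  obtain ⟨g, hg⟩ := exists_forall_eq_smul_of_d_comp_eq _ _ _ φ hy
  obtain ⟨b, hb, hne⟩ := h s hjs g
  exact hne (hg b hb)

end HomologicalAlgebra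

section CechClass

variable {k : Type} [Field k] {σ : Type} {v : σ}

open Classical in
variable (k) in
/-- The substitution `x_i ↦ 0` for `i ≠ v`, as an endomorphism of `k[x_i : i ∈ σ]`. -/
def onlyVar (v : σ) : MvPolynomial σ k →ₐ[k] MvPolynomial σ k :=
  aeval fun i => if i = v then X v else 0

theorem onlyVar_X_self : onlyVar k v (X v) = X v := by
  simp [onlyVar]

theorem X_pow_dvd_onlyVar_of_mem {N : ℕ} {h : MvPolynomial σ k} (hh : h ∈ maxIdeal k σ ^ N) :
    X v ^ N ∣ onlyVar k v h := by
  have hmap : (maxIdeal k σ).map (onlyVar k v) ≤ Ideal.span {X v} := by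
    rw [maxIdeal, Ideal.map_span, Ideal.span_le]
    rintro _ ⟨_, ⟨i, rfl⟩, rfl⟩
    by_cases hi : i = v <;> simp [onlyVar, hi]
  rw [← Ideal.mem_span_singleton, ← Ideal.span_singleton_pow]
  exact Ideal.pow_right_mono hmap N (Ideal.map_pow (onlyVar k v) _ N ▸ Ideal.mem_map_of_mem _ hh)

theorem onlyVar_sub_self_mem_span (g : MvPolynomial σ k) :
    onlyVar k v g - g ∈ Ideal.span (X '' {i : σ | i ≠ v}) := by
  rw [← Ideal.Quotient.mk_eq_mk_iff_sub_mem]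
  suffices h : (Ideal.Quotient.mkₐ k (Ideal.span (X '' {i : σ | i ≠ v}))).comp (onlyVar k v) =
      Ideal.Quotient.mkₐ k _ from DFunLike.congr_fun h g
  refine algHom_ext fun i => ?_
  by_cases hi : i = v
  · rw [hi, AlgHom.comp_apply, onlyVar_X_self]
  · have hmem : (X i : MvPolynomial σ k) ∈ Ideal.span (X '' {i : σ | i ≠ v}) :=
      Ideal.subset_span ⟨i, hi, rfl⟩
    rw [AlgHom.comp_apply, onlyVar, aeval_X, if_neg hi, map_zero]
    exact (Ideal.Quotient.eq_zero_iff_mem.2 hmem).symm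

theorem onlyVar_sub_self_mul_mem {J : Ideal (MvPolynomial σ k)} {F : MvPolynomial σ k}
    (hF : ∀ i ≠ v, X i * F ∈ J) (g : MvPolynomial σ k) : (onlyVar k v g - g) * F ∈ J := by
  have hle : Ideal.span (X '' {i : σ | i ≠ v}) ≤ J.colon {F} := by
    rw [Ideal.span_le]
    rintro _ ⟨i, hi, rfl⟩
    exact Submodule.mem_colon_singleton.2 (hF i hi)
  exact Submodule.mem_colon_singleton.1 (hle (onlyVar_sub_self_mem_span g))

/-- The quotient of `onlyVar k v h` by `x_v ^ N`. The division is exact for `h ∈ m ^ N`; in general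
the terms of degree less than `N` are dropped. -/
def onlyVarDiv (v : σ) (N : ℕ) (h : MvPolynomial σ k) : MvPolynomial σ k :=
  (onlyVar k v h).divMonomial (Finsupp.single v N)

theorem onlyVarDiv_eq {N : ℕ} {h p : MvPolynomial σ k} (hp : onlyVar k v h = X v ^ N * p) :
    onlyVarDiv v N h = p := by
  rw [onlyVarDiv, hp, X_pow_eq_monomial, divMonomial_monomial_mul]

theorem onlyVarDiv_mul {N : ℕ} (g : MvPolynomial σ k) {h : MvPolynomial σ k}
    (hh : h ∈ maxIdeal k σ ^ N) :
    onlyVarDiv v N (g * h) = onlyVar k v g * onlyVarDiv v N h := by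
  obtain ⟨p, hp⟩ := X_pow_dvd_onlyVar_of_mem (v := v) hh
  rw [onlyVarDiv_eq hp]
  exact onlyVarDiv_eq (by rw [map_mul, hp]; ring)

theorem onlyVarDiv_mul_mul_sub_mem {J : Ideal (MvPolynomial σ k)} {F : MvPolynomial σ k}
    (hF : ∀ i ≠ v, X i * F ∈ J) {N : ℕ} (g : MvPolynomial σ k) {h : MvPolynomial σ k}
    (hh : h ∈ maxIdeal k σ ^ N) :
    onlyVarDiv v N (g * h) * F - g * (onlyVarDiv v N h * F) ∈ J := by
  have hsub : onlyVarDiv v N (g * h) * F - g * (onlyVarDiv v N h * F) =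
      onlyVarDiv v N h * ((onlyVar k v g - g) * F) := by
    rw [onlyVarDiv_mul g hh]
    ring
  rw [hsub]
  exact J.mul_mem_left _ (onlyVar_sub_self_mul_mem hF g)

/-- The homomorphism `m ^ N → R/J` with `x_v ^ (s + N) ↦ x_v ^ s * F` vanishing on the monomials
other than powers of `x_v`; it represents the Čech class `F / x_v ^ N` in `H¹_m(R/J)`. -/
def cechHom {J : Ideal (MvPolynomial σ k)} {F : MvPolynomial σ k} (hF : ∀ i ≠ v, X i * F ∈ J)
    (N : ℕ) : ↥(maxIdeal k σ ^ N) →ₗ[MvPolynomial σ k] MvPolynomial σ k ⧸ J where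
  toFun h := Ideal.Quotient.mk J (onlyVarDiv v N h * F)
  map_add' h h' := by
    rw [← map_add, onlyVarDiv, onlyVarDiv, onlyVarDiv, Submodule.coe_add, map_add,
      add_divMonomial, add_mul]
  map_smul' g h := by
    rw [Submodule.coe_smul, smul_eq_mul]
    exact Ideal.Quotient.eq.2 (onlyVarDiv_mul_mul_sub_mem hF g h.2)

theorem nontrivial_locCoh_one_of_mul_X_mem {J : Ideal (MvPolynomial σ k)}
    {F : MvPolynomial σ k} (hF : ∀ i ≠ v, X i * F ∈ J) {N : ℕ}
    (hne : ∀ s g, X v ^ s * F - X v ^ (s + N) * g ∉ J) :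
    Nontrivial (locCoh k J 1) := by
  refine nontrivial_localCohomology_one_of_forall_ne_smul (cechHom hF N) fun s hNs g => ?_
  obtain ⟨s, rfl⟩ := Nat.exists_eq_add_of_le' hNs
  obtain ⟨g, rfl⟩ := Ideal.Quotient.mk_surjective g
  have hXv : (X v : MvPolynomial σ k) ∈ maxIdeal k σ := Ideal.subset_span ⟨v, rfl⟩
  refine ⟨X v ^ (s + N), Ideal.pow_mem_pow hXv _, fun heq => hne s g ?_⟩
  have hdiv : onlyVarDiv v N (X v ^ (s + N) : MvPolynomial σ k) = X v ^ s :=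
    onlyVarDiv_eq (by rw [map_pow, onlyVar_X_self]; ring)
  rw [← Ideal.Quotient.mk_eq_mk_iff_sub_mem, ← hdiv]
  exact heq

end CechClass

section Specialization

open scoped Polynomial

variable {k : Type} [Field k] {σ : Type} {Γ : SimpleGraph σ} {v : σ}

open Classical in
variable (k Γ v) in
/-- The ring homomorphism `k[x_i : i ∈ σ] → k[y][T]` sending `x_v` to `y`, the neighbors of `v` to
`T²` and all other variables to `T`. Every edge lands in `(T²)`, while `x_v` is not killed modulo
`T`. -/
def specialize : MvPolynomial σ k →ₐ[k] k[X][X] :=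
  aeval fun i => if i = v then Polynomial.C Polynomial.X
    else if Γ.Adj v i then Polynomial.X ^ 2 else Polynomial.X

theorem specialize_X_self : specialize k Γ v (X v) = Polynomial.C Polynomial.X := by
  simp [specialize]

theorem specialize_X_of_adj {i : σ} (h : Γ.Adj v i) :
    specialize k Γ v (X i) = Polynomial.X ^ 2 := by
  simp [specialize, h, h.ne']

theorem specialize_X_of_notMem {i : σ} (h : i ∉ closedNbhd Γ v) :
    specialize k Γ v (X i) = Polynomial.X := by
  obtain ⟨hne, hadj⟩ : i ≠ v ∧ ¬ Γ.Adj v i := by simpa [closedNbhd] using h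
  simp [specialize, hne, hadj]

theorem X_dvd_specialize_X {i : σ} (h : i ≠ v) : Polynomial.X ∣ specialize k Γ v (X i) := by
  by_cases hadj : Γ.Adj v i
  · simp [specialize_X_of_adj hadj, pow_two]
  · simp [specialize, h, hadj]

theorem X_sq_dvd_specialize_edge {i j : σ} (h : Γ.Adj i j) :
    Polynomial.X ^ 2 ∣ specialize k Γ v (X i * X j) := by
  rw [map_mul]
  by_cases hi : i = v
  · subst hi
    exact Dvd.intro_left _ (congrArg _ (specialize_X_of_adj h).symm)
  · by_cases hj : j = v
    · subst hj
      exact Dvd.intro _ (congrArg (· * _) (specialize_X_of_adj h.symm).symm)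
    · rw [pow_two]
      exact mul_dvd_mul (X_dvd_specialize_X hi) (X_dvd_specialize_X hj)

theorem X_pow_dvd_specialize_of_mem {t : ℕ} {p : MvPolynomial σ k}
    (hp : p ∈ edgeIdeal k Γ ^ t) : Polynomial.X ^ (2 * t) ∣ specialize k Γ v p := by
  have hmap : (edgeIdeal k Γ).map (specialize k Γ v) ≤ Ideal.span {Polynomial.X ^ 2} := by
    rw [edgeIdeal, Ideal.map_span, Ideal.span_le]
    rintro _ ⟨_, ⟨i, j, hij, rfl⟩, rfl⟩
    exact Ideal.mem_span_singleton.2 (X_sq_dvd_specialize_edge hij)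
  rw [pow_mul, ← Ideal.mem_span_singleton, ← Ideal.span_singleton_pow]
  exact Ideal.pow_right_mono hmap t
    (Ideal.map_pow (specialize k Γ v) _ t ▸ Ideal.mem_map_of_mem _ hp)

theorem specialize_monomial {a : σ →₀ ℕ} (ha : ↑a.support ⊆ (closedNbhd Γ v)ᶜ) :
    specialize k Γ v (monomial a 1) = Polynomial.X ^ a.degree := by
  rw [monomial_eq, C_1, one_mul, Finsupp.prod, map_prod, Finsupp.degree_apply,
    ← Finset.prod_pow_eq_pow_sum]
  exact Finset.prod_congr rfl fun i hi => by rw [map_pow, specialize_X_of_notMem (ha hi)]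

theorem X_pow_mul_monomial_sub_notMem {t : ℕ} {a : σ →₀ ℕ}
    (ha : ↑a.support ⊆ (closedNbhd Γ v)ᶜ) (hdeg : a.degree < 2 * t) {s N : ℕ} (hsN : s < N)
    (g : MvPolynomial σ k) :
    X v ^ s * monomial a 1 - X v ^ N * g ∉ edgeIdeal k Γ ^ t := by
  intro hmem
  have hcoeff := Polynomial.X_pow_dvd_iff.1 (X_pow_dvd_specialize_of_mem (v := v) hmem) _ hdeg
  have hcoeff' : (Polynomial.X : k[X]) ^ s =
      Polynomial.X ^ N * (specialize k Γ v g).coeff a.degree := by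
    rwa [map_sub, map_mul, map_mul, map_pow, map_pow, specialize_X_self, specialize_monomial ha,
      ← Polynomial.C_pow, ← Polynomial.C_pow, Polynomial.coeff_sub, Polynomial.coeff_C_mul,
      Polynomial.coeff_C_mul, Polynomial.coeff_X_pow_self, mul_one, sub_eq_zero] at hcoeff
  have hdvd : (Polynomial.X : k[X]) ^ N ∣ Polynomial.X ^ s := Dvd.intro _ hcoeff'.symm
  exact hsN.not_ge ((pow_dvd_pow_iff Polynomial.X_ne_zero Polynomial.not_isUnit_X).1 hdvd)

end Specialization

theorem nontrivial_locCoh_one_edgeIdeal_pow {k : Type} [Field k] {σ : Type}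
    {Γ : SimpleGraph σ} {v : σ} {t : ℕ} {a : σ →₀ ℕ}
    (ha : ↑a.support ⊆ (closedNbhd Γ v)ᶜ) (hdeg : a.degree = 2 * t + 1)
    (hmem : (monomial a 1 : MvPolynomial σ k) ∈ edgeIdeal k Γ ^ t)
    (hmul : ∀ j ∉ closedNbhd Γ v,
      X j * (monomial a 1 : MvPolynomial σ k) ∈ edgeIdeal k Γ ^ (t + 1)) :
    Nontrivial (locCoh k (edgeIdeal k Γ ^ (t + 1)) 1) := by
  -- The class `x^a / x_v`, with the numerator multiplied by `x_v` so that `N(v)` annihilates it.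
  refine nontrivial_locCoh_one_of_mul_X_mem (v := v) (F := X v * monomial a 1) (N := 2) ?_ ?_
  · intro i hi
    by_cases hadj : Γ.Adj v i
    · rw [pow_succ, show (X i * (X v * monomial a 1) : MvPolynomial σ k) =
        monomial a 1 * (X v * X i) by ring]
      exact Ideal.mul_mem_mul hmem (Ideal.subset_span ⟨v, i, hadj, rfl⟩)
    · rw [mul_left_comm]
      exact Ideal.mul_mem_left _ _ (hmul i (by simp [closedNbhd, hi, hadj]))
  · intro s g
    rw [← mul_assoc, ← pow_succ]
    exact X_pow_mul_monomial_sub_notMem ha (by lia) (by lia) g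

section EdgeSum

variable {σ : Type} {Γ : SimpleGraph σ} {t : ℕ}

/-- `b` is the exponent vector of a product of `t` edges of `Γ`, repetitions being allowed. -/
inductive IsEdgeSum (Γ : SimpleGraph σ) : ℕ → (σ →₀ ℕ) → Prop
  | zero : IsEdgeSum Γ 0 0
  | add_edge {t : ℕ} {b : σ →₀ ℕ} {i j : σ} (hb : IsEdgeSum Γ t b) (hij : Γ.Adj i j) :
      IsEdgeSum Γ (t + 1) (b + (Finsupp.single i 1 + Finsupp.single j 1))

namespace IsEdgeSum

theorem degree_eq {b : σ →₀ ℕ} (hb : IsEdgeSum Γ t b) : b.degree = 2 * t := by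
  induction hb with
  | zero => simp
  | add_edge _ _ ih => simp only [map_add, Finsupp.degree_single, ih]; ring

theorem monomial_mem {b : σ →₀ ℕ} (hb : IsEdgeSum Γ t b) (k : Type) [Field k] :
    (monomial b 1 : MvPolynomial σ k) ∈ edgeIdeal k Γ ^ t := by
  induction hb with
  | zero => simp
  | @add_edge t b i j _ hij ih =>
    have hedge : (monomial (Finsupp.single i 1 + Finsupp.single j 1) 1 : MvPolynomial σ k) =
        X i * X j := by
      rw [X, X, monomial_mul, one_mul]
    rw [← one_mul (1 : k), ← monomial_mul, hedge, pow_succ]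
    exact Ideal.mul_mem_mul ih (Ideal.subset_span ⟨i, j, hij, rfl⟩)

theorem sum_range {d : ℕ → σ} (hd : ∀ l, Γ.Adj (d l) (d (l + 1))) (t : ℕ) :
    IsEdgeSum Γ t (∑ l ∈ Finset.range (2 * t), Finsupp.single (d l) 1) := by
  induction t with
  | zero => exact .zero
  | succ t ih =>
    rw [Nat.mul_succ, Finset.sum_range_succ, Finset.sum_range_succ, add_assoc]
    exact ih.add_edge (hd _)

end IsEdgeSum

end EdgeSum

theorem exists_adj_of_connected_induce {σ : Type} {Γ : SimpleGraph σ} {S W : Set σ}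
    (hconn : (Γ.induce S).Connected) (hne : W.Nonempty) (hWS : W ⊂ S) :
    ∃ u ∈ W, ∃ w ∈ S \ W, Γ.Adj u w := by
  obtain ⟨x, hxW⟩ := hne
  obtain ⟨y, hyS, hyW⟩ := Set.exists_of_ssubset hWS
  obtain ⟨p⟩ := hconn.preconnected ⟨x, hWS.1 hxW⟩ ⟨y, hyS⟩
  obtain ⟨e, -, hfst, hsnd⟩ := p.exists_boundary_dart (Subtype.val ⁻¹' W) hxW hyW
  exact ⟨e.fst, hfst, e.snd, ⟨e.snd.2, hsnd⟩, e.adj⟩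

section FactorCritical

variable {σ : Type} {Γ : SimpleGraph σ} {W S : Set σ} {t : ℕ} {a : σ →₀ ℕ}

/-- A weighted analogue of factor-critical graphs: `a` is an exponent vector supported on `W` such
that lowering it by one at any vertex of `W` leaves a product of `t` edges. The last condition
makes the notion stable under adding edges to `a`. -/
structure IsFactorCritical (Γ : SimpleGraph σ) (W : Set σ) (t : ℕ) (a : σ →₀ ℕ) : Prop where
  support_subset : ↑a.support ⊆ W
  exists_isEdgeSum : ∀ w ∈ W, ∃ b, IsEdgeSum Γ t b ∧ a = Finsupp.single w 1 + b
  exists_adj : ∀ w ∈ W, ∃ u ∈ W, Γ.Adj w u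

theorem sum_zmod_succ {A : Type*} [AddCommMonoid A] {n : ℕ} (f : ZMod (n + 1) → A) :
    ∑ i, f i = ∑ l ∈ Finset.range (n + 1), f l := by
  rw [Finset.sum_range]
  exact Finset.sum_congr rfl fun i _ => congrArg f (Fin.cast_val_eq_self i).symm

theorem isFactorCritical_range {r : ℕ} {c : ZMod (2 * r + 1) → σ}
    (hc : ∀ i, Γ.Adj (c i) (c (i + 1))) :
    IsFactorCritical Γ (Set.range c) r (∑ i, Finsupp.single (c i) 1) where
  support_subset := (Finsupp.supported ℕ ℕ (Set.range c)).sum_mem fun i _ =>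
    Finsupp.single_mem_supported ℕ 1 ⟨i, rfl⟩
  exists_isEdgeSum := by
    rintro _ ⟨j, rfl⟩
    refine ⟨_, IsEdgeSum.sum_range (d := fun l => c (j + (l + 1 : ℕ))) (fun l => ?_) r, ?_⟩
    · rw [Nat.cast_succ (l + 1), ← add_assoc]
      exact hc _
    · rw [← Equiv.sum_comp (Equiv.addLeft j), sum_zmod_succ, Finset.sum_range_succ', add_comm]
      simp
  exists_adj := by
    rintro _ ⟨j, rfl⟩
    exact ⟨_, ⟨j + 1, rfl⟩, hc j⟩

namespace IsFactorCritical

theorem insert_of_adj (ha : IsFactorCritical Γ W t a) {u w : σ} (hu : u ∈ W) (huw : Γ.Adj u w) :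
    IsFactorCritical Γ (insert w W) (t + 1)
      (a + (Finsupp.single u 1 + Finsupp.single w 1)) where
  support_subset :=
    have hsupp {x : σ} (hx : x ∈ insert w W) :
        Finsupp.single x 1 ∈ Finsupp.supported ℕ ℕ (insert w W) :=
      Finsupp.single_mem_supported ℕ 1 hx
    add_mem (Finsupp.supported_mono (Set.subset_insert w W) ha.support_subset)
      (add_mem (hsupp (.inr hu)) (hsupp (.inl rfl)))
  exists_isEdgeSum := by
    rintro x (rfl | hx)
    · -- The spare factor `x_u` is paired with the factor `x_u'` that `a` can give up.
      obtain ⟨u', hu', huu'⟩ := ha.exists_adj u hu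
      obtain ⟨b, hb, rfl⟩ := ha.exists_isEdgeSum u' hu'
      exact ⟨_, hb.add_edge huu', by abel⟩
    · obtain ⟨b, hb, rfl⟩ := ha.exists_isEdgeSum x hx
      exact ⟨_, hb.add_edge huw, add_assoc _ _ _⟩
  exists_adj := by
    rintro x (rfl | hx)
    · exact ⟨u, .inr hu, huw.symm⟩
    · obtain ⟨y, hy, hxy⟩ := ha.exists_adj x hx
      exact ⟨y, .inr hy, hxy⟩

theorem exists_add (ha : IsFactorCritical Γ W t a) (hne : W.Nonempty) (d : ℕ) :
    ∃ a', IsFactorCritical Γ W (t + d) a' := by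
  induction d with
  | zero => exact ⟨a, ha⟩
  | succ d ih =>
    obtain ⟨a', ha'⟩ := ih
    obtain ⟨u, hu⟩ := hne
    obtain ⟨w, hw, huw⟩ := ha'.exists_adj u hu
    exact ⟨_, Set.insert_eq_of_mem hw ▸ ha'.insert_of_adj hu huw⟩

theorem exists_superset (ha : IsFactorCritical Γ W t a) (hne : W.Nonempty) (hWS : W ⊆ S)
    (hfin : S.Finite) (hconn : (Γ.induce S).Connected) {d : ℕ} (hd : W.ncard + d ≤ S.ncard) :
    ∃ W' a', W ⊆ W' ∧ W' ⊆ S ∧ W'.ncard = W.ncard + d ∧ IsFactorCritical Γ W' (t + d) a' := by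
  induction d with
  | zero => exact ⟨W, a, subset_rfl, hWS, rfl, ha⟩
  | succ d ih =>
    obtain ⟨W', a', hWW', hW'S, hcard, ha'⟩ := ih (by lia)
    have hssub : W' ⊂ S := hW'S.ssubset_of_ne fun h => by rw [h] at hcard; lia
    obtain ⟨u, hu, w, hw, huw⟩ := exists_adj_of_connected_induce hconn (hne.mono hWW') hssub
    refine ⟨_, _, hWW'.trans (Set.subset_insert w W'), Set.insert_subset hw.1 hW'S, ?_,
      ha'.insert_of_adj hu huw⟩
    rw [Set.ncard_insert_of_notMem hw.2 (hfin.subset hW'S), hcard, add_assoc]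

theorem exists_adj_of_ncard_eq_succ (ha : IsFactorCritical Γ W t a) (hne : W.Nonempty)
    (hWS : W ⊆ S) (hconn : (Γ.induce S).Connected) (hcard : S.ncard = W.ncard + 1) {j : σ}
    (hj : j ∈ S) : ∃ w ∈ W, Γ.Adj j w := by
  have hfin : S.Finite := Set.finite_of_ncard_pos (by lia)
  have hssub : W ⊂ S := hWS.ssubset_of_ne fun h => by rw [h] at hcard; lia
  obtain ⟨u, hu, w, hw, huw⟩ := exists_adj_of_connected_induce hconn hne hssub
  have hS : insert w W = S := Set.eq_of_subset_of_ncard_le (Set.insert_subset hw.1 hWS)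
    (by rw [Set.ncard_insert_of_notMem hw.2 (hfin.subset hWS), hcard]) hfin
  obtain rfl | hjW := hS.symm ▸ hj
  · exact ⟨u, hu, huw.symm⟩
  · exact ha.exists_adj j hjW

theorem degree_eq (ha : IsFactorCritical Γ W t a) (hne : W.Nonempty) : a.degree = 2 * t + 1 := by
  obtain ⟨w, hw⟩ := hne
  obtain ⟨b, hb, rfl⟩ := ha.exists_isEdgeSum w hw
  rw [map_add, Finsupp.degree_single, hb.degree_eq, add_comm]

theorem nontrivial_locCoh (ha : IsFactorCritical Γ W t a) (hne : W.Nonempty) {v : σ}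
    (hW : W ⊆ (closedNbhd Γ v)ᶜ) (hadj : ∀ j ∉ closedNbhd Γ v, ∃ w ∈ W, Γ.Adj j w)
    (k : Type) [Field k] : Nontrivial (locCoh k (edgeIdeal k Γ ^ (t + 1)) 1) := by
  refine nontrivial_locCoh_one_edgeIdeal_pow (ha.support_subset.trans hW) (ha.degree_eq hne) ?_ ?_
  · obtain ⟨w, hw⟩ := hne
    obtain ⟨b, hb, rfl⟩ := ha.exists_isEdgeSum w hw
    rw [← one_mul (1 : k), ← monomial_mul]
    exact Ideal.mul_mem_left _ _ (hb.monomial_mem k)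
  · intro j hj
    obtain ⟨w, hw, hjw⟩ := hadj j hj
    obtain ⟨b, hb, rfl⟩ := ha.exists_isEdgeSum w hw
    have hmul : X j * monomial (Finsupp.single w 1 + b) (1 : k) =
        monomial (b + (Finsupp.single j 1 + Finsupp.single w 1)) 1 := by
      rw [X, monomial_mul, one_mul]
      congr 2
      abel
    exact hmul ▸ (hb.add_edge hjw).monomial_mem k

end IsFactorCritical

end FactorCritical

section OddCycle

variable {σ : Type} {Γ : SimpleGraph σ} {r : ℕ} {c : ZMod (2 * r + 1) → σ} {v : σ}

theorem nontrivial_locCoh_one_of_range_eq (hc : ∀ i, Γ.Adj (c i) (c (i + 1)))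
    (hrange : Set.range c = (closedNbhd Γ v)ᶜ) {t : ℕ} (ht : r + 1 ≤ t) (k : Type) [Field k] :
    Nontrivial (locCoh k (edgeIdeal k Γ ^ t) 1) := by
  obtain ⟨e, rfl⟩ := Nat.exists_eq_add_of_le ht
  obtain ⟨a, ha⟩ := (isFactorCritical_range hc).exists_add (Set.range_nonempty c) e
  rw [add_right_comm]
  exact ha.nontrivial_locCoh (Set.range_nonempty c) hrange.subset
    (fun j hj => ha.exists_adj j (hrange.superset hj)) k

theorem nontrivial_locCoh_one_of_range_ssubset (hinj : Function.Injective c)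
    (hc : ∀ i, Γ.Adj (c i) (c (i + 1))) (hfin : ((closedNbhd Γ v)ᶜ).Finite)
    (hconn : (Γ.induce (closedNbhd Γ v)ᶜ).Connected)
    (hrange : Set.range c ⊂ (closedNbhd Γ v)ᶜ) {t : ℕ}
    (ht : (closedNbhd Γ v)ᶜ.ncard - r - 1 ≤ t) (k : Type) [Field k] :
    Nontrivial (locCoh k (edgeIdeal k Γ ^ t) 1) := by
  have hcard : (Set.range c).ncard = 2 * r + 1 := by
    rw [← Set.image_univ, Set.ncard_image_of_injective _ hinj, Set.ncard_univ, Nat.card_zmod]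
  have hlt : 2 * r + 1 < (closedNbhd Γ v)ᶜ.ncard := hcard ▸ Set.ncard_lt_ncard hrange hfin
  obtain ⟨d, hd⟩ := Nat.exists_eq_add_of_lt hlt
  obtain ⟨W, a, hcW, hW, hWcard, ha⟩ := (isFactorCritical_range hc).exists_superset
    (Set.range_nonempty c) hrange.subset hfin hconn (d := d) (by lia)
  have hne : W.Nonempty := (Set.range_nonempty c).mono hcW
  obtain ⟨e, rfl⟩ : ∃ e, t = r + d + e + 1 := ⟨t - (r + d + 1), by lia⟩
  obtain ⟨a', ha'⟩ := ha.exists_add hne e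
  exact ha'.nontrivial_locCoh hne hW
    (fun j hj => ha'.exists_adj_of_ncard_eq_succ hne hW hconn (by lia) hj) k

end OddCycle

theorem stmt5_general (k : Type) [Field k] {σ : Type} (Γ : SimpleGraph σ) (r : ℕ)
    (c : ZMod (2 * r + 1) → σ) (hcyc : IsOddCycle Γ (2 * r + 1) c) (v : σ)
    (hfin : ((closedNbhd Γ v)ᶜ).Finite) (hindconn : (Γ.induce (closedNbhd Γ v)ᶜ).Connected) :
    (Set.range c = (closedNbhd Γ v)ᶜ →
      ∀ t : ℕ, r + 1 ≤ t → Nontrivial (locCoh k (edgeIdeal k Γ ^ t) 1)) ∧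
    (Set.range c ⊂ (closedNbhd Γ v)ᶜ →
      ∀ t : ℕ, (closedNbhd Γ v)ᶜ.ncard - r - 1 ≤ t →
        Nontrivial (locCoh k (edgeIdeal k Γ ^ t) 1)) :=
  have ⟨_, _, hinj, hadj⟩ := hcyc
  ⟨fun hrange _ ht => nontrivial_locCoh_one_of_range_eq hadj hrange ht k,
    fun hrange _ ht =>
      nontrivial_locCoh_one_of_range_ssubset hinj hadj hfin hindconn hrange ht k⟩

/-- Let `Γ` be a connected non-bipartite graph having at least one odd
cycle whose vertex set is not dominating. Assume there are an odd cycle `C` of length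
`2r+1` and a vertex `v ∉ C` not adjacent to any vertex of `C` such that the induced
subgraph `Γ_{V ∖ N[v]}` is connected. Then:
(1) if `C = V ∖ N[v]`, then `H^1_m(R/I^t) ≠ 0` for all `t ≥ r + 1`;
(2) if `C ⊊ V ∖ N[v]`, then `H^1_m(R/I^t) ≠ 0` for all `t ≥ n - |N[v]| - r - 1`. -/
theorem stmt5 (k : Type) [Field k] (n : ℕ) (Γ : SimpleGraph (Fin n))
    (hiso : NoIsolated Γ) (hconn : Γ.Connected) (hnb : ¬ Γ.Colorable 2)
    (hnondom : ∃ (m : ℕ) (c' : ZMod m → Fin n), IsOddCycle Γ m c' ∧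
      ¬ Dominating Γ (Set.range c'))
    (r : ℕ) (hr : 1 ≤ r) (c : ZMod (2 * r + 1) → Fin n)
    (hcyc : IsOddCycle Γ (2 * r + 1) c)
    (v : Fin n) (hv : v ∉ Set.range c) (hvadj : ∀ u ∈ Set.range c, ¬ Γ.Adj v u)
    (hindconn : (Γ.induce ((closedNbhd Γ v)ᶜ : Set (Fin n))).Connected) :
    (Set.range c = ((closedNbhd Γ v)ᶜ : Set (Fin n)) →
      ∀ t : ℕ, r + 1 ≤ t → Nontrivial (locCoh k ((edgeIdeal k Γ) ^ t) 1)) ∧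
    (Set.range c ⊂ ((closedNbhd Γ v)ᶜ : Set (Fin n)) →
      ∀ t : ℕ, n - (closedNbhd Γ v).ncard - r - 1 ≤ t →
        Nontrivial (locCoh k ((edgeIdeal k Γ) ^ t) 1)) := by
  have hncard : (closedNbhd Γ v)ᶜ.ncard = n - (closedNbhd Γ v).ncard := by
    rw [Set.ncard_compl, Nat.card_fin]
  exact hncard ▸ stmt5_general k Γ r c hcyc v (Set.toFinite _) hindconn

end
end
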